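/- arXiv:2009.04827 — 2 statements merged into one kernel-verified Lean document; each statement's English description precedes it below -/
import Mathlib

section
/- For every n ≥ 3, the last n bits of db(n) are all 1s; that is, db(n)[2^n−n .. 2^n−1] = 1^n. -/
/-- `occ w x`: the number of indices `i` with `x[i..i+|w|-1] = w`,
i.e. the number of occurrences of `w` as a substring of `x`. -/
def occ (w x : List Bool) : ℕ :=
  ((List.range (x.length + 1 - w.length)).filter
    (fun i => decide ((x.drop i).take w.length = w))).length

/-- `occB w x`: the number of occurrences of `w` as a substring of `x`
starting at a position divisible by `|w|` (aligned block occurrences). -/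
def occB (w x : List Bool) : ℕ :=
  ((List.range (x.length + 1 - w.length)).filter
    (fun i => decide (i % w.length = 0) && decide ((x.drop i).take w.length = w))).length

/-- `x` is a de Bruijn string of order `n`: it has length `2^n` and every binary
string of length `n` occurs exactly once as a substring of `x ++ x[0..n-2]`. -/
def IsDeBruijn (n : ℕ) (x : List Bool) : Prop :=
  x.length = 2 ^ n ∧ ∀ w : List Bool, w.length = n → occ w (x ++ x.take (n - 1)) = 1

open Classical in
/-- `db n` is the lexicographically least de Bruijn string of order `n`
(using the lexicographic order on `List Bool`, with `false < true`);
`[]` if none exists. -/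
noncomputable def db (n : ℕ) : List Bool :=
  if h : ∃ x : List Bool, IsDeBruijn n x ∧ ∀ y, IsDeBruijn n y → x ≤ y then h.choose else []

/-- The block `B_{n,i} = db_i(n)^t`: `t` copies of the cyclic left shift of `db n` by `i`. -/
noncomputable def Bblk (n t i : ℕ) : List Bool := (List.replicate t ((db n).rotate i)).flatten

/-- The odd part `t` of `n = 2^s * t`. -/
def oddPart (n : ℕ) : ℕ := n / 2 ^ (n.factorization 2)

/-- `Sblk n` is the string `S_n = B_{n,0} B_{n,1} ⋯ B_{n,2^s-1}` where `n = 2^s * t`, `t` odd. -/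
noncomputable def Sblk (n : ℕ) : List Bool :=
  ((List.range (2 ^ (n.factorization 2))).map (fun i => Bblk n (oddPart n) i)).flatten

/-- `Sfin m = S_1 S_2 ⋯ S_m`. -/
noncomputable def Sfin (m : ℕ) : List Bool := ((List.range m).map (fun k => Sblk (k + 1))).flatten

/-- The infinite sequence `S = S_1 S_2 S_3 ⋯`, as a function giving its `i`-th bit. -/
noncomputable def Sseq (i : ℕ) : Bool := (Sfin (i + 1)).getD i false

/-- For odd `n`, `S_n = db(n)^n`. -/
noncomputable def Sodd (n : ℕ) : List Bool := (List.replicate n (db n)).flatten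

/-!
The word `db (m + 1)` is spelled by the greedy walk on the de Bruijn graph that starts at `1 ⋯ 1`
and prefers edges labelled `0`. This walk can get stuck only where it started, after having used
every edge, and its last edge is the loop at `1 ⋯ 1`; hence the final ones. A smaller de Bruijn word
would first deviate by taking an edge `0` that the greedy walk used among its first `m` steps, so at
a vertex `1^(m-d) 0^d`; from there the edges already used force it down to `0 ⋯ 0`, which it has
visited twice before.
-/

/-- The length-`k` window of the sequence `s` that starts at position `i`. In the de Bruijn graph
whose vertices are the words of length `m`, the windows of length `m` are the vertices visited by
`s` and the windows of length `m + 1` are the edges it traverses. -/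
def window (k : ℕ) (s : ℕ → Bool) (i : ℕ) : Fin k → Bool := fun l => s (i + l)

section Window

variable {k i j l : ℕ} {s t : ℕ → Bool}

lemma window_eq_iff : window k s i = window k t j ↔ ∀ l < k, s (i + l) = t (j + l) :=
  funext_iff.trans Fin.forall_iff

lemma window_succ_eq_iff_last :
    window (k + 1) s i = window (k + 1) t j ↔
      window k s i = window k t j ∧ s (i + k) = t (j + k) := by
  simp only [window_eq_iff, Nat.forall_lt_succ_right]

lemma window_succ_eq_iff_first :
    window (k + 1) s i = window (k + 1) t j ↔
      s i = t j ∧ window k s (i + 1) = window k t (j + 1) := by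
  simp only [window_eq_iff, Nat.forall_lt_succ_left, add_zero, add_assoc, add_comm 1]

lemma window_surjective_zero (k : ℕ) : Function.Surjective fun s => window k s 0 := fun v =>
  ⟨fun i => if h : i < k then v ⟨i, h⟩ else false, by ext i; simp [window]⟩

lemma window_eq_or_eq_of_ne (hne : window (k + 1) s i ≠ window (k + 1) s j)
    (hij : window k s (i + 1) = window k s (j + 1))
    (hl : window k t (l + 1) = window k s (i + 1)) :
    window (k + 1) t l = window (k + 1) s i ∨ window (k + 1) t l = window (k + 1) s j := by
  rw [ne_eq, window_succ_eq_iff_first, not_and'] at hne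
  have hbit := hne hij
  simp only [window_succ_eq_iff_first, hl, ← hij, and_true]
  revert hbit
  cases s i <;> cases s j <;> cases t l <;> simp

lemma exists_lt_window_eq (hs : Set.InjOn (window k s) (Set.Iio (2 ^ k))) (v : Fin k → Bool) :
    ∃ i < 2 ^ k, window k s i = v := by
  rw [← Finset.coe_range] at hs
  obtain ⟨i, hi, hv⟩ := Finset.surjOn_of_injOn_of_card_le (t := Finset.univ) (window k s)
    (fun _ _ => Finset.mem_coe.2 (Finset.mem_univ _)) hs (by simp)
    (Finset.mem_coe.2 (Finset.mem_univ v))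
  exact ⟨i, Finset.mem_range.1 hi, hv⟩

end Window

/-- The prefer-zero sequence: `m` leading ones, after which each bit is zero unless the preceding
`m` bits have already occurred as an earlier window. It is the greedy walk from the vertex `1 ⋯ 1`
of the de Bruijn graph that takes the edge labelled `0` whenever that edge is still unused. -/
def preferZero (m i : ℕ) : Bool :=
  if i < m then true
  else decide (∃ j : Fin (i - m), ∀ l : Fin m, preferZero m (j + l) = preferZero m (i - m + l))
termination_by i
decreasing_by all_goals omega

section PreferZero

variable {m i j : ℕ}

lemma preferZero_of_lt (h : i < m) : preferZero m i = true := by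
  rw [preferZero, if_pos h]

lemma preferZero_add_eq_true_iff :
    preferZero m (j + m) = true ↔
      ∃ i < j, window m (preferZero m) i = window m (preferZero m) j := by
  rw [preferZero, if_neg (by omega), decide_eq_true_iff, Nat.add_sub_cancel, Fin.exists_iff]
  simp only [funext_iff, window, exists_prop]

lemma exists_first_visit (m j : ℕ) :
    ∃ i ≤ j, window m (preferZero m) i = window m (preferZero m) j ∧
      preferZero m (i + m) = false := by
  induction j using Nat.strong_induction_on with
  | _ j ih =>
    cases hj : preferZero m (j + m) with
    | false => exact ⟨j, le_rfl, rfl, hj⟩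
    | true =>
      obtain ⟨i, hij, hi⟩ := preferZero_add_eq_true_iff.1 hj
      obtain ⟨b, hbi, hb, hb0⟩ := ih i hij
      exact ⟨b, hbi.trans hij.le, hb.trans hi, hb0⟩

lemma preferZero_add_eq_false (hj : j ≤ m) : preferZero m (j + m) = false := by
  have zero : preferZero m (0 + m) = false := by
    rw [← Bool.not_eq_true, preferZero_add_eq_true_iff]
    rintro ⟨i, hi, -⟩
    exact Nat.not_lt_zero i hi
  rw [← Bool.not_eq_true, preferZero_add_eq_true_iff]
  rintro ⟨i, hij, h⟩
  have hbit := window_eq_iff.1 h (m - j) (by omega)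
  rw [preferZero_of_lt (by omega), show j + (m - j) = 0 + m by omega, zero] at hbit
  exact Bool.noConfusion hbit

lemma lt_of_preferZero_add_eq_true (hj : preferZero m (j + m) = true) : m < j := by
  by_contra h
  simp [preferZero_add_eq_false (not_lt.1 h)] at hj

lemma exists_first_repeated_edge (m : ℕ) :
    ∃ T, Set.InjOn (window (m + 1) (preferZero m)) (Set.Iio T) ∧
      ∃ j < T, window (m + 1) (preferZero m) j = window (m + 1) (preferZero m) T := by
  classical
  have hex : ∃ T, ∃ j < T,
      window (m + 1) (preferZero m) j = window (m + 1) (preferZero m) T := by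
    obtain ⟨a, b, hne, hab⟩ :=
      Finite.exists_ne_map_eq_of_infinite (window (m + 1) (preferZero m))
    rcases hne.lt_or_gt with h | h
    · exact ⟨b, a, h, hab⟩
    · exact ⟨a, b, h, hab.symm⟩
  refine ⟨Nat.find hex, fun a ha b hb hab => ?_, Nat.find_spec hex⟩
  by_contra hne
  rcases Ne.lt_or_gt hne with h | h
  · exact Nat.find_min hex hb ⟨a, h, hab⟩
  · exact Nat.find_min hex ha ⟨b, h, hab.symm⟩

variable {T : ℕ}

/-- A vertex has only two incoming edges, so the walk cannot enter a vertex three times without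
repeating one; hence it gets stuck only at a vertex that it also visited at time `0`. -/
lemma window_first_repeat_eq_window_zero
    (hinj : Set.InjOn (window (m + 1) (preferZero m)) (Set.Iio T)) (hjT : j < T)
    (hj : window (m + 1) (preferZero m) j = window (m + 1) (preferZero m) T) :
    window m (preferZero m) T = window m (preferZero m) 0 := by
  obtain ⟨hvertex, hbit⟩ := window_succ_eq_iff_last.1 hj
  have hT : preferZero m (T + m) = true := preferZero_add_eq_true_iff.2 ⟨j, hjT, hvertex⟩
  obtain ⟨i, hij, hi⟩ := preferZero_add_eq_true_iff.1 (hbit.trans hT)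
  match i, j, T with
  | 0, _, _ => exact (hi.trans hvertex).symm
  | i + 1, j + 1, T + 1 =>
    have hne : window (m + 1) (preferZero m) i ≠ window (m + 1) (preferZero m) j := fun h => by
      have := hinj (Set.mem_Iio.2 (by omega)) (Set.mem_Iio.2 (by omega)) h
      omega
    rcases window_eq_or_eq_of_ne hne hi (hi.trans hvertex).symm with h | h <;>
    · have := hinj (Set.mem_Iio.2 (by omega)) (Set.mem_Iio.2 (by omega)) h
      omega

/-- If both edges out of a vertex have been used, the walk has entered it twice, so both edges into
it have been used as well. -/
lemma exists_lt_window_eq_of_tail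
    (hinj : Set.InjOn (window (m + 1) (preferZero m)) (Set.Iio T))
    (hT : window m (preferZero m) T = window m (preferZero m) 0)
    {a : ℕ} (haT : a < T) (ha : preferZero m (a + m) = true) {u : ℕ → Bool}
    (hu : window m u (i + 1) = window m (preferZero m) a) :
    ∃ b < T, window (m + 1) u i = window (m + 1) (preferZero m) b := by
  obtain ⟨x, y, hxy, hxT, hyT, hx, hy⟩ : ∃ x y, x ≠ y ∧ x < T ∧ y < T ∧
      window m (preferZero m) (x + 1) = window m (preferZero m) a ∧
      window m (preferZero m) (y + 1) = window m (preferZero m) a := by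
    obtain ⟨c, hca, hc⟩ := preferZero_add_eq_true_iff.1 ha
    match c, a, T with
    | 0, a + 1, T + 1 => exact ⟨a, T, by omega, by omega, by omega, rfl, hT.trans hc⟩
    | c + 1, a + 1, _ => exact ⟨c, a, by omega, by omega, by omega, hc, rfl⟩
  rcases window_eq_or_eq_of_ne (fun h => hxy (hinj hxT hyT h)) (hx.trans hy.symm)
    (hu.trans hx.symm) with h | h
  · exact ⟨x, hxT, h⟩
  · exact ⟨y, hyT, h⟩

lemma exists_lt_window_eq_of_eventually_true
    (hinj : Set.InjOn (window (m + 1) (preferZero m)) (Set.Iio T)) (hjT : j < T)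
    (hj : window (m + 1) (preferZero m) j = window (m + 1) (preferZero m) T)
    (c : ℕ) (hc : c ≤ m) (u : ℕ → Bool) (hu : ∀ i, c ≤ i → u i = true) :
    ∃ a < T, window (m + 1) u 0 = window (m + 1) (preferZero m) a := by
  have hT := window_first_repeat_eq_window_zero hinj hjT hj
  obtain ⟨hvertex, hbit⟩ := window_succ_eq_iff_last.1 hj
  induction c generalizing u with
  | zero =>
    refine ⟨j, hjT, window_succ_eq_iff_last.2 ⟨?_, ?_⟩⟩
    · rw [hvertex, hT, window_eq_iff]
      intro l hl
      rw [hu _ (Nat.zero_le _), preferZero_of_lt (by omega)]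
    · rw [hu _ (Nat.zero_le _), hbit, preferZero_add_eq_true_iff.2 ⟨j, hjT, hvertex⟩]
  | succ c ih =>
    obtain ⟨a, haT, ha⟩ := ih (by omega) (fun i => u (i + 1)) (fun i hi => hu _ (by omega))
    obtain ⟨hav, hab⟩ := window_succ_eq_iff_last.1 ha
    refine exists_lt_window_eq_of_tail hinj hT haT ?_ (i := 0) ?_
    · rw [← hab]
      exact hu _ (by omega)
    · rw [← hav, window_eq_iff]
      intro l _
      rw [show 0 + 1 + l = 0 + l + 1 by omega]

lemma exists_lt_window_eq_of_first_repeat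
    (hinj : Set.InjOn (window (m + 1) (preferZero m)) (Set.Iio T)) (hjT : j < T)
    (hj : window (m + 1) (preferZero m) j = window (m + 1) (preferZero m) T) (u : ℕ → Bool) :
    ∃ a < T, window (m + 1) (preferZero m) a = window (m + 1) u 0 := by
  obtain ⟨a, haT, ha⟩ := exists_lt_window_eq_of_eventually_true hinj hjT hj m le_rfl
    (fun i => if i < m then u i else true) (fun i hi => if_neg (by omega))
  obtain ⟨hvertex, hbit⟩ := window_succ_eq_iff_last.1 ha
  have hau : window m (preferZero m) a = window m u 0 := by
    rw [← hvertex, window_eq_iff]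
    exact fun l hl => if_pos (by omega)
  cases hum : u (0 + m) with
  | true =>
    refine ⟨a, haT, window_succ_eq_iff_last.2 ⟨hau, ?_⟩⟩
    rw [← hbit, hum, if_neg (by omega)]
  | false =>
    obtain ⟨b, hba, hb, hb0⟩ := exists_first_visit m a
    exact ⟨b, by omega, window_succ_eq_iff_last.2 ⟨hb.trans hau, hb0.trans hum.symm⟩⟩

lemma first_repeat_eq_two_pow
    (hinj : Set.InjOn (window (m + 1) (preferZero m)) (Set.Iio T)) (hjT : j < T)
    (hj : window (m + 1) (preferZero m) j = window (m + 1) (preferZero m) T) :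
    T = 2 ^ (m + 1) := by
  have hcard : (Finset.range T).card = (Finset.univ : Finset (Fin (m + 1) → Bool)).card := by
    refine Finset.card_nbij (window (m + 1) (preferZero m)) (fun _ _ => Finset.mem_univ _)
      (by rwa [Finset.coe_range]) fun v _ => ?_
    obtain ⟨u, rfl⟩ := window_surjective_zero (m + 1) v
    obtain ⟨a, haT, ha⟩ := exists_lt_window_eq_of_first_repeat hinj hjT hj u
    exact ⟨a, by simpa using haT, ha⟩
  simpa using hcard

theorem injOn_window_preferZero (m : ℕ) :
    Set.InjOn (window (m + 1) (preferZero m)) (Set.Iio (2 ^ (m + 1))) := by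
  obtain ⟨T, hinj, j, hjT, hj⟩ := exists_first_repeated_edge m
  rwa [← first_repeat_eq_two_pow hinj hjT hj]

lemma window_preferZero_two_pow (m : ℕ) :
    window m (preferZero m) (2 ^ (m + 1)) = window m (preferZero m) 0 := by
  obtain ⟨T, hinj, j, hjT, hj⟩ := exists_first_repeated_edge m
  rw [← first_repeat_eq_two_pow hinj hjT hj]
  exact window_first_repeat_eq_window_zero hinj hjT hj

lemma preferZero_mod_two_pow (h : i < 2 ^ (m + 1) + m) :
    preferZero m (i % 2 ^ (m + 1)) = preferZero m i := by
  have hm : m < 2 ^ (m + 1) := (Nat.lt_succ_self m).trans Nat.lt_two_pow_self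
  rcases lt_or_ge i (2 ^ (m + 1)) with hi | hi
  · rw [Nat.mod_eq_of_lt hi]
  · obtain ⟨l, rfl⟩ := Nat.exists_eq_add_of_le hi
    have hl := window_eq_iff.1 (window_preferZero_two_pow m) l (by omega)
    rw [hl, Nat.add_mod_left, Nat.mod_eq_of_lt (by omega), zero_add]

/-- The loop at `1 ⋯ 1` is the last edge: right after traversing it the walk is back at the already
visited vertex `1 ⋯ 1`, so it would take the loop once more. -/
lemma preferZero_eq_true_of_two_pow_le (h : 2 ^ (m + 1) ≤ i + 1) (hi : i < 2 ^ (m + 1) + m) :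
    preferZero m i = true := by
  obtain ⟨j, hj, hloop⟩ :=
    exists_lt_window_eq (injOn_window_preferZero m) (fun _ => true)
  have hones : ∀ l ≤ m, preferZero m (j + l) = true := fun l hl =>
    congrFun hloop ⟨l, Nat.lt_succ_of_le hl⟩
  have hvertex : window m (preferZero m) j = window m (preferZero m) (j + 1) := by
    rw [window_eq_iff]
    intro l hl
    rw [hones l hl.le, add_assoc, hones (1 + l) (by omega)]
  have hj1 : 2 ^ (m + 1) ≤ j + 1 := by
    by_contra! hlt
    have hrepeat : window (m + 1) (preferZero m) j = window (m + 1) (preferZero m) (j + 1) :=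
      window_succ_eq_iff_last.2 ⟨hvertex, (hones m le_rfl).trans
        (preferZero_add_eq_true_iff.2 ⟨j, j.lt_succ_self, hvertex⟩).symm⟩
    have := injOn_window_preferZero m hj hlt hrepeat
    omega
  have := hones (i - j) (by omega)
  rwa [Nat.add_sub_cancel' (by omega)] at this

/-- The vertex visited at time `t` has been left along its edge `0` before, and following zeros from
there only leads to vertices ending in `0`, so the walk has reached all of them before time `t`. -/
lemma exists_lt_window_eq_zero_shift {t : ℕ} (hm : 0 < m)
    (hlast : preferZero m (t + (m - 1)) = true) (ht : preferZero m (t + m) = true) (c : ℕ) :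
    ∃ j < t, window m (preferZero m) j =
      window m (fun i => if i < m then preferZero m (t + i) else false) c := by
  induction c with
  | zero =>
    obtain ⟨j, hjt, hj⟩ := preferZero_add_eq_true_iff.1 ht
    refine ⟨j, hjt, hj.trans (window_eq_iff.2 fun l hl => ?_)⟩
    simp only [zero_add, if_pos hl]
  | succ c ih =>
    obtain ⟨j, hjt, hj⟩ := ih
    obtain ⟨b, hbj, hb, hb0⟩ := exists_first_visit m j
    have hedge : window (m + 1) (preferZero m) b =
        window (m + 1) (fun i => if i < m then preferZero m (t + i) else false) c :=
      window_succ_eq_iff_last.2 ⟨hb.trans hj, by rw [hb0, if_neg (by omega)]⟩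
    have hnext := (window_succ_eq_iff_first.1 hedge).2
    refine ⟨b + 1, lt_of_le_of_ne (by omega) fun hbt => ?_, hnext⟩
    have hbit := window_eq_iff.1 hnext (m - 1) (by omega)
    rw [hbt, hlast, if_neg (by omega)] at hbit
    exact Bool.noConfusion hbit

lemma exists_run_start {p r : ℕ} (hr : 0 < r) (hp : m ≤ p)
    (hrun : ∀ i < r, preferZero m (p + i) = true) :
    ∃ q, m ≤ q ∧ q < p ∧ preferZero m q = false ∧
      ∀ i < r, preferZero m (q + 1 + i) = true := by
  induction p, hp using Nat.le_induction with
  | base =>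
    have hm := hrun 0 hr
    rw [add_comm m, preferZero_add_eq_false (Nat.zero_le m)] at hm
    exact Bool.noConfusion hm
  | succ p hp ih =>
    cases hbit : preferZero m p with
    | false => exact ⟨p, hp, p.lt_succ_self, hbit, hrun⟩
    | true =>
      obtain ⟨q, hmq, hqp, hq⟩ := ih fun i hi => match i with
        | 0 => hbit
        | i + 1 => by
          rw [← hrun i (by omega)]
          congr 1
          omega
      exact ⟨q, hmq, by omega, hq⟩

/-- Let `a = m - d - 1`. Before the first run `1 ⋯ 1` of length `a + 1` is completed, its vertex
`z ⋯ 0 1 ⋯ 1` has been left along `0`; following zeros, the walk then passes through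
`0 1^a 0^d`, and so enters `1^a 0^(d+1)` by the edge that it did not use at time `d`. -/
lemma exists_revisit_of_run {d p : ℕ} (hd : d + 1 < m) (hp : m ≤ p)
    (hrun : ∀ i < m - d, preferZero m (p + i) = true) :
    ∃ j, j + d < p ∧ window m (preferZero m) j = window m (preferZero m) (d + 1) ∧
      preferZero m (j + m) = true := by
  obtain ⟨q, hmq, hqp, hq, hones⟩ := exists_run_start (by omega) hp hrun
  obtain ⟨t, rfl⟩ : ∃ t, q = t + d := ⟨q - d, by omega⟩
  have hrun' : ∀ i, d < i → i ≤ m → preferZero m (t + i) = true := fun i hdi him => by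
    rw [← hones (i - (d + 1)) (by omega)]
    congr 1
    omega
  obtain ⟨j, hjt, hj⟩ := exists_lt_window_eq_zero_shift (by omega)
    (hrun' (m - 1) (by omega) (by omega)) (hrun' m (by omega) le_rfl) d
  obtain ⟨b, hbj, hb, hb0⟩ := exists_first_visit m j
  obtain ⟨hfirst, hnext⟩ := window_succ_eq_iff_first.1
    (window_succ_eq_iff_last.2 ⟨hb.trans hj, by rw [hb0, if_neg (by omega)]⟩)
  have hmb : m ≤ b := by
    by_contra! hbm
    rw [preferZero_of_lt hbm, if_pos (by omega), hq] at hfirst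
    exact Bool.noConfusion hfirst
  have hvertex : window m (preferZero m) (b + 1) = window m (preferZero m) (d + 1) := by
    rw [hnext, window_eq_iff]
    intro l hl
    split_ifs with hdl
    · rw [hrun' _ (by omega) hdl.le, preferZero_of_lt hdl]
    · rw [← preferZero_add_eq_false (m := m) (j := d + 1 + l - m) (by omega),
        Nat.sub_add_cancel (by omega)]
  exact ⟨b + 1, by omega, hvertex, preferZero_add_eq_true_iff.2 ⟨d + 1, by omega, hvertex.symm⟩⟩

end PreferZero

section Minimality

variable {m : ℕ} {f : ℕ → Bool}

lemma window_eq_of_prefix {k j l : ℕ} (hpre : ∀ i < k, f i = preferZero m (i + m))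
    (h : j + l ≤ k) : window l f j = window l (preferZero m) (j + m) :=
  window_eq_iff.2 fun i hi => by rw [hpre _ (by omega), add_right_comm]

/-- After taking `0` at `1^(m-d) 0^d` instead of `1`, the sequence `f` finds the edge `1` out of
each of `1^(m-d-1) 0^(d+1)`, `1^(m-d-2) 0^(d+2)`, … already used, by `exists_revisit_of_run`. -/
lemma window_eq_of_deviation (hf : Set.InjOn (window (m + 1) f) (Set.Iio (2 ^ (m + 1))))
    {p d : ℕ} (hp : p + m < 2 ^ (m + 1)) (hpre : ∀ i < p + m, f i = preferZero m (i + m))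
    (hfp : f (p + m) = false)
    (hvertex : window m (preferZero m) (p + m) = window m (preferZero m) d)
    (q : ℕ) (hq : d + q ≤ m) : window m f (p + q) = window m (preferZero m) (d + q) := by
  induction q with
  | zero => exact (window_eq_of_prefix hpre le_rfl).trans hvertex
  | succ q ih =>
    have hW := ih (by omega)
    suffices hbit : f (p + q + m) = false from
      (window_succ_eq_iff_first.1 (window_succ_eq_iff_last.2
        ⟨hW, hbit.trans (preferZero_add_eq_false (by omega)).symm⟩)).2
    rcases q with _ | q
    · exact hfp
    have hrun : ∀ i < m - (d + q), preferZero m (p + m + i) = true := fun i hi => by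
      rw [window_eq_iff.1 hvertex i (by omega), preferZero_of_lt (by omega)]
    obtain ⟨j, hjp, hj, hj1⟩ := exists_revisit_of_run (by omega) (by omega) hrun
    have hmj := lt_of_preferZero_add_eq_true hj1
    obtain ⟨i, rfl⟩ : ∃ i, j = i + m := ⟨j - m, by omega⟩
    by_contra hbit
    have hrepeat : window (m + 1) f i = window (m + 1) f (p + (q + 1)) := by
      rw [window_eq_of_prefix hpre (by omega)]
      exact window_succ_eq_iff_last.2
        ⟨hj.trans hW.symm, hj1.trans (Bool.eq_true_of_not_eq_false hbit).symm⟩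
    have := hf (Set.mem_Iio.2 (by omega)) (Set.mem_Iio.2 (by omega)) hrepeat
    omega

lemma exists_lt_of_deviation (hf : Set.InjOn (window (m + 1) f) (Set.Iio (2 ^ (m + 1))))
    {p : ℕ} (hp : p + m < 2 ^ (m + 1)) (hpre : ∀ i < p + m, f i = preferZero m (i + m))
    (hfp : f (p + m) = false) (hs : preferZero m (p + m + m) = true) :
    ∃ d < m, window m (preferZero m) (p + m) = window m (preferZero m) d := by
  obtain ⟨d, hd, hvertex, hd0⟩ := exists_first_visit m (p + m)
  refine ⟨d, ?_, hvertex.symm⟩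
  by_contra! hmd
  obtain ⟨i, rfl⟩ := Nat.exists_eq_add_of_le' hmd
  have hip : i ≠ p := by
    rintro rfl
    simp [hs] at hd0
  have hrepeat : window (m + 1) f i = window (m + 1) f p := by
    rw [window_eq_of_prefix hpre (by omega), window_succ_eq_iff_last]
    exact ⟨hvertex.trans (window_eq_of_prefix hpre le_rfl).symm, hd0.trans hfp.symm⟩
  exact hip (hf (Set.mem_Iio.2 (by omega)) (Set.mem_Iio.2 (by omega)) hrepeat)

theorem preferZero_eq_false_of_prefix
    (hf : Set.InjOn (window (m + 1) f) (Set.Iio (2 ^ (m + 1)))) {k : ℕ} (hk : k < 2 ^ (m + 1))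
    (hpre : ∀ i < k, f i = preferZero m (i + m)) (hfk : f k = false) :
    preferZero m (k + m) = false := by
  by_contra hs
  rw [Bool.not_eq_false] at hs
  have hmk := lt_of_preferZero_add_eq_true hs
  obtain ⟨p, rfl⟩ := Nat.exists_eq_add_of_le' hmk.le
  obtain ⟨d, hdm, hvertex⟩ := exists_lt_of_deviation hf hk hpre hfk hs
  have hend : window m f (p + (m - d)) = window m (preferZero m) m := by
    rw [window_eq_of_deviation hf hk hpre hfk hvertex _ (by omega), Nat.add_sub_cancel' hdm.le]
  have hzero : window m f 0 = window m (preferZero m) m := by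
    rw [window_eq_of_prefix hpre (by omega), zero_add]
  have hone : window m f 1 = window m (preferZero m) m := by
    rw [window_eq_of_prefix hpre (by omega), window_eq_iff]
    intro l hl
    rw [show 1 + m + l = 1 + l + m by omega, add_comm m l, preferZero_add_eq_false (by omega),
      preferZero_add_eq_false hl.le]
  have hne {a b : ℕ} (hab : a ≠ b) (ha : a ≤ p + m) (hb : b ≤ p + m)
      (h : window m f a = window m f b) : f (a + m) ≠ f (b + m) := fun hbit =>
    hab (hf (Set.mem_Iio.2 (by omega)) (Set.mem_Iio.2 (by omega))
      (window_succ_eq_iff_last.2 ⟨h, hbit⟩))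
  have h01 := hne zero_ne_one (by omega) (by omega) (hzero.trans hone.symm)
  have h0 := hne (a := 0) (by omega) (by omega) (by omega) (hzero.trans hend.symm)
  have h1 := hne (a := 1) (by omega) (by omega) (by omega) (hone.trans hend.symm)
  revert h01 h0 h1
  cases f (0 + m) <;> cases f (1 + m) <;> cases f (p + (m - d) + m) <;> simp

end Minimality

/-- The cyclic reading of the word `x` as a periodic sequence. The default value `false` only
matters for the empty word. -/
def cyclic (x : List Bool) (i : ℕ) : Bool := x.getD (i % x.length) false

lemma cyclic_of_lt {x : List Bool} {i : ℕ} (h : i < x.length) : cyclic x i = x[i] := by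
  rw [cyclic, Nat.mod_eq_of_lt h, List.getD_eq_getElem _ _ h]

section IsDeBruijn

variable {n i : ℕ} {x : List Bool}

lemma take_drop_append_eq_ofFn_window (hn : n ≤ x.length) (hi : i < x.length) :
    ((x ++ x.take (n - 1)).drop i).take n = List.ofFn (window n (cyclic x) i) := by
  apply List.ext_getElem
  · simp only [List.length_take, List.length_drop, List.length_append, List.length_ofFn]
    omega
  · intro l h₁ h₂
    rw [List.length_ofFn] at h₂
    simp only [List.getElem_take, List.getElem_drop, List.getElem_ofFn, window]
    rcases lt_or_ge (i + l) x.length with hl | hl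
    · rw [List.getElem_append_left hl, cyclic_of_lt hl]
    · rw [List.getElem_append_right hl, List.getElem_take, cyclic, Nat.mod_eq_sub_mod hl,
        Nat.mod_eq_of_lt (by omega), List.getD_eq_getElem]

lemma occ_append_take_eq_card (hn : 0 < n) (hnx : n ≤ x.length) (v : Fin n → Bool) :
    occ (List.ofFn v) (x ++ x.take (n - 1)) =
      ((Finset.range x.length).filter fun i => window n (cyclic x) i = v).card := by
  have hlen : (x ++ x.take (n - 1)).length + 1 - n = x.length := by
    simp only [List.length_append, List.length_take]
    omega
  rw [occ, List.length_ofFn, hlen, ← List.toFinset_card_of_nodup (List.nodup_range.filter _)]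
  congr 1
  ext i
  simp only [List.mem_toFinset, List.mem_filter, List.mem_range, decide_eq_true_eq,
    Finset.mem_filter, Finset.mem_range]
  refine and_congr_right fun hi => ?_
  rw [take_drop_append_eq_ofFn_window hnx hi, List.ofFn_injective.eq_iff]

theorem isDeBruijn_iff_injOn_window (hn : 0 < n) :
    IsDeBruijn n x ↔
      x.length = 2 ^ n ∧ Set.InjOn (window n (cyclic x)) (Set.Iio (2 ^ n)) := by
  refine and_congr_right fun hx => ?_
  have hocc (v : Fin n → Bool) : occ (List.ofFn v) (x ++ x.take (n - 1)) = 1 ↔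
      ∃! i, i < 2 ^ n ∧ window n (cyclic x) i = v := by
    rw [occ_append_take_eq_card hn (hx ▸ Nat.lt_two_pow_self.le),
      Finset.card_eq_one_iff_existsUnique, hx]
    simp only [Finset.mem_filter, Finset.mem_range]
  constructor
  · intro h i hi j hj hij
    exact ((hocc _).1 (h _ List.length_ofFn)).unique ⟨hi, hij⟩ ⟨hj, rfl⟩
  · rintro hinj w rfl
    rw [← List.ofFn_get w, List.length_ofFn, hocc]
    obtain ⟨i, hi, hiw⟩ := exists_lt_window_eq hinj w.get
    exact ⟨i, ⟨hi, hiw⟩, fun j ⟨hj, hjw⟩ => hinj hj hi (hjw.trans hiw.symm)⟩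

end IsDeBruijn

/-- The de Bruijn word of order `m + 1` read off the prefer-zero sequence after its `m` leading
ones. -/
def preferZeroWord (m : ℕ) : List Bool :=
  (List.range (2 ^ (m + 1))).map fun i => preferZero m (i + m)

section PreferZeroWord

variable (m : ℕ)

lemma length_preferZeroWord : (preferZeroWord m).length = 2 ^ (m + 1) := by
  simp only [preferZeroWord, List.length_map, List.length_range]

lemma window_cyclic_preferZeroWord (i : ℕ) :
    window (m + 1) (cyclic (preferZeroWord m)) i =
      window (m + 1) (preferZero m) ((i + m) % 2 ^ (m + 1)) := by
  have hlt (j : ℕ) : j % 2 ^ (m + 1) < 2 ^ (m + 1) := Nat.mod_lt _ (by positivity)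
  have hcyclic (j : ℕ) :
      cyclic (preferZeroWord m) j = preferZero m ((j + m) % 2 ^ (m + 1)) := by
    have := hlt j
    rw [cyclic, length_preferZeroWord, List.getD_eq_getElem _ _ (by rwa [length_preferZeroWord]),
      ← Nat.mod_add_mod, preferZero_mod_two_pow (by omega)]
    simp only [preferZeroWord, List.getElem_map, List.getElem_range]
  refine window_eq_iff.2 fun l hl => ?_
  have := hlt (i + m)
  rw [hcyclic, add_right_comm, ← Nat.mod_add_mod, preferZero_mod_two_pow (by omega)]

theorem isDeBruijn_preferZeroWord : IsDeBruijn (m + 1) (preferZeroWord m) := by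
  refine (isDeBruijn_iff_injOn_window m.succ_pos).2 ⟨length_preferZeroWord m, ?_⟩
  intro a ha b hb hab
  rw [window_cyclic_preferZeroWord, window_cyclic_preferZeroWord] at hab
  have hmod : a + m ≡ b + m [MOD 2 ^ (m + 1)] :=
    injOn_window_preferZero m (Nat.mod_lt _ (by positivity)) (Nat.mod_lt _ (by positivity)) hab
  exact (Nat.ModEq.add_right_cancel' m hmod).eq_of_lt_of_lt ha hb

variable {m}

theorem preferZeroWord_le {y : List Bool} (hy : IsDeBruijn (m + 1) y) :
    preferZeroWord m ≤ y := by
  obtain ⟨hlen, hinj⟩ := (isDeBruijn_iff_injOn_window m.succ_pos).1 hy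
  rw [← not_lt, List.lt_iff_exists]
  rintro (⟨-, hlt⟩ | ⟨k, hk, _, hpre, hlt⟩)
  · exact hlt.ne (hlen.trans (length_preferZeroWord m).symm)
  obtain ⟨hyk, hsk⟩ := Bool.lt_iff.1 hlt
  have hfalse : preferZero m (k + m) = false := by
    refine preferZero_eq_false_of_prefix hinj (hlen ▸ hk) (fun i hi => ?_)
      ((cyclic_of_lt hk).trans hyk)
    rw [cyclic_of_lt (hi.trans hk), hpre i hi]
    simp only [preferZeroWord, List.getElem_map, List.getElem_range]
  simp [preferZeroWord, hfalse] at hsk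

theorem db_succ_eq_preferZeroWord : db (m + 1) = preferZeroWord m := by
  have hex : ∃ x, IsDeBruijn (m + 1) x ∧ ∀ y, IsDeBruijn (m + 1) y → x ≤ y :=
    ⟨_, isDeBruijn_preferZeroWord m, fun _ => preferZeroWord_le⟩
  rw [db, dif_pos hex]
  exact le_antisymm (hex.choose_spec.2 _ (isDeBruijn_preferZeroWord m))
    (preferZeroWord_le hex.choose_spec.1)

end PreferZeroWord

/-- For every `n ≥ 3`, the last `n` bits of `db n` are all `1`s. -/
theorem stmt2 (n : ℕ) (hn : 3 ≤ n) :
    (db n).drop (2 ^ n - n) = List.replicate n true := by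
  obtain ⟨m, rfl⟩ := Nat.exists_eq_add_of_le' (Nat.one_le_of_lt hn)
  have hm : m + 1 < 2 ^ (m + 1) := Nat.lt_two_pow_self
  rw [db_succ_eq_preferZeroWord, List.eq_replicate_iff, List.length_drop, length_preferZeroWord]
  refine ⟨by omega, fun b hb => ?_⟩
  obtain ⟨i, hi, rfl⟩ := List.mem_iff_getElem.1 hb
  rw [List.length_drop, length_preferZeroWord] at hi
  simp only [preferZeroWord, List.getElem_drop, List.getElem_map, List.getElem_range]
  exact preferZero_eq_true_of_two_pow_le (by omega) (by omega)
end

section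
/- Let n ≥ 1 and write n = 2^s·t with t odd. For every binary string w of length n there is exactly one index i ∈ {0, …, 2^s−1} such that w occurs as an aligned block of the string B_{n,i} = db_i(n)^t (i.e., occ_B(w, B_{n,i}) = 1), and occ_B(w, B_{n,j}) = 0 for every j ≠ i. Consequently each block B_{n,i} contains exactly 2^{n−s} distinct binary strings of length n as aligned blocks, each exactly once. -/
/-
In `db(n)` read cyclically, the `k`-th aligned block of `B_{n,i}` starts at position
`i + n k = i + 2 ^ s (t k)` modulo `2 ^ n = 2 ^ s * 2 ^ (n - s)`. As `t` is odd, hence coprime to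
`2 ^ (n - s)`, these positions run exactly once through the residue class of `i` modulo `2 ^ s`,
while every word of length `n` is read at exactly one position of `db(n)`.

That `db(n)` is a de Bruijn string at all requires one to exist. Consider the permutations of words
that drop the first letter and append a new one. Composing with the transposition of two words
having the same tail merges their cycles if these are different, so such a permutation whose cycles
are as coarse as possible never separates words with the same tail, and therefore has one cycle.
-/

section

open Equiv Equiv.Perm Set
open Finset (range)
open scoped Finset

section CycleJoining

variable {α : Type*}

lemma sameCycle_mul_swap_of_not_sameCycle [DecidableEq α] [Finite α] {f : Perm α} {a b : α}
    (hab : ¬ f.SameCycle a b) : (f * swap a b).SameCycle a b := by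
  have hstep (c : α) (hca : c ≠ a) (hc : (f * swap a b).SameCycle a c) :
      (f * swap a b).SameCycle a (f c) := by
    by_cases hcb : c = b
    · have hfc : f c = (f * swap a b) a := by simp [hcb]
      rw [hfc, sameCycle_apply_right]
    · have hfc : f c = (f * swap a b) c := by simp [swap_apply_of_ne_of_ne hca hcb]
      rwa [hfc, sameCycle_apply_right]
  have horbit (k : ℕ) : (f * swap a b).SameCycle a ((f ^ k) (f b)) := by
    induction k with
    | zero => simpa using sameCycle_apply_right.2 (SameCycle.refl (f * swap a b) a)
    | succ k ih =>
      rw [pow_succ', Perm.mul_apply]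
      refine hstep _ (fun h ↦ hab ?_) ih
      rw [← h, sameCycle_pow_left, sameCycle_apply_left]
  obtain ⟨k, hk⟩ := (sameCycle_apply_left.2 (SameCycle.refl f b)).exists_nat_pow_eq
  simpa only [hk] using horbit k

lemma sameCycle_setoid_le_iff {f : Perm α} {r : Setoid α} :
    SameCycle.setoid f ≤ r ↔ ∀ c, r c (f c) := by
  refine ⟨fun h c ↦ h (sameCycle_apply_right.2 (SameCycle.refl f c)), fun h ↦ ?_⟩
  rintro c _ ⟨k, rfl⟩
  induction k using Int.induction_on with
  | zero => exact r.refl c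
  | succ k ih =>
    rw [add_comm, zpow_add, zpow_one]
    exact r.trans ih (h _)
  | pred k ih =>
    have hk : f ^ (-(k : ℤ)) = f * f ^ (-(k : ℤ) - 1) := by
      rw [← zpow_one_add, add_sub_cancel]
    rw [hk] at ih
    exact r.trans ih (r.symm (h _))

lemma sameCycle_setoid_le_mul_swap [DecidableEq α] [Finite α] {f : Perm α} {a b : α}
    (hab : ¬ f.SameCycle a b) : SameCycle.setoid f ≤ SameCycle.setoid (f * swap a b) := by
  have hjoin := sameCycle_mul_swap_of_not_sameCycle hab
  refine sameCycle_setoid_le_iff.2 fun c ↦ ?_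
  change (f * swap a b).SameCycle c (f c)
  have hfc : f c = (f * swap a b) (swap a b c) := by simp
  rw [hfc, sameCycle_apply_right]
  rw [swap_apply_def]
  split_ifs with hca hcb
  · rwa [hca]
  · rw [hcb]
    exact hjoin.symm
  · rfl

lemma bijOn_pow_apply {f : Perm α} {s : Finset α} {a : α} (hf : f.IsCycleOn s) (ha : a ∈ s) :
    BijOn (fun k : ℕ ↦ (f ^ k) a) (Iio s.card) s := by
  refine ⟨fun k _ ↦ hf.1.mapsTo.perm_pow k ha, fun k hk l hl hkl ↦ ?_, fun b hb ↦ ?_⟩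
  · exact Nat.ModEq.eq_of_lt_of_lt (hf.pow_apply_eq_pow_apply ha |>.1 hkl) hk hl
  · exact hf.exists_pow_eq ha hb

end CycleJoining

section ShiftPerm

variable {α : Type*} {n : ℕ}

/-- A permutation of the words of length `n + 1` whose values extend along edges of the de Bruijn
graph: the image of `a₀ a₁ ⋯ aₙ` is `a₁ ⋯ aₙ b` for some letter `b`. De Bruijn sequences are read
off from those permutations consisting of a single cycle. -/
def IsShiftPerm (f : Perm (Fin (n + 1) → α)) : Prop :=
  ∀ w, Fin.init (f w) = Fin.tail w

variable (α n) in
lemma exists_isShiftPerm : ∃ f : Perm (Fin (n + 1) → α), IsShiftPerm f := by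
  refine ⟨(finRotate (n + 1)).symm.arrowCongr (Equiv.refl α), fun w ↦ funext fun j ↦ ?_⟩
  simp [Fin.init, Fin.tail]

lemma IsShiftPerm.mul_swap [DecidableEq (Fin (n + 1) → α)] {f : Perm (Fin (n + 1) → α)}
    (hf : IsShiftPerm f) {u v : Fin (n + 1) → α} (huv : Fin.tail u = Fin.tail v) :
    IsShiftPerm (f * swap u v) := by
  intro w
  rw [Perm.mul_apply, hf, swap_apply_def]
  split_ifs with hu hv
  · rw [hu, huv]
  · rw [hv, huv]
  · rfl

lemma IsShiftPerm.apply_eq_pow_apply_zero {f : Perm (Fin (n + 1) → α)} (hf : IsShiftPerm f)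
    (w : Fin (n + 1) → α) (j : Fin (n + 1)) : w j = (f ^ (j : ℕ)) w 0 := by
  induction j using Fin.induction generalizing w with
  | zero => rfl
  | succ j ih =>
    calc w j.succ = f w j.castSucc := (congrFun (hf w) j).symm
      _ = (f ^ (j : ℕ)) (f w) 0 := ih (f w)
      _ = (f ^ (j.succ : ℕ)) w 0 := by rw [← Perm.mul_apply, ← pow_succ, Fin.val_succ]

lemma setoid_rel_of_forall_init_eq_tail (r : Setoid (Fin (n + 1) → α))
    (hr : ∀ u v, Fin.init v = Fin.tail u → r u v) (u v : Fin (n + 1) → α) : r u v := by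
  -- The windows of the concatenation `u v` form a walk from `u` to `v`.
  let a (k : ℕ) : α := if k < n + 1 then u (Fin.ofNat (n + 1) k) else v (Fin.ofNat (n + 1) k)
  let window (p : ℕ) : Fin (n + 1) → α := fun j ↦ a (p + j)
  have hu : window 0 = u := by
    funext j
    simp [window, a, Fin.is_le]
  have hv : window (n + 1) = v := by
    funext j
    have hj : ¬ n + 1 + (j : ℕ) < n + 1 := by lia
    simp only [window, a, if_neg hj]
    congr 1
    ext
    simp [Fin.is_le]
  have hwalk (p : ℕ) : r (window 0) (window p) := by
    induction p with
    | zero => exact r.refl _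
    | succ p ih =>
      refine r.trans ih (hr _ _ (funext fun j ↦ ?_))
      simp [window, Fin.init, Fin.tail, add_assoc, add_comm 1]
  exact hu ▸ hv ▸ hwalk (n + 1)

variable (α n) in
theorem exists_isShiftPerm_isCycleOn_univ [Finite α] :
    ∃ f : Perm (Fin (n + 1) → α), IsShiftPerm f ∧ f.IsCycleOn univ := by
  classical
  obtain ⟨f, hf, hmax⟩ := (toFinite {f : Perm (Fin (n + 1) → α) | IsShiftPerm f}).exists_maximalFor
    SameCycle.setoid _ (exists_isShiftPerm α n)
  have htail (u v : Fin (n + 1) → α) (huv : Fin.tail u = Fin.tail v) : f.SameCycle u v := by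
    by_contra hne
    exact hne <| hmax (hf.mul_swap huv) (sameCycle_setoid_le_mul_swap hne)
      (sameCycle_mul_swap_of_not_sameCycle hne)
  refine ⟨f, hf, f.bijective.bijOn_univ, fun u _ v _ ↦
    setoid_rel_of_forall_init_eq_tail (SameCycle.setoid f) (fun u v huv ↦ ?_) u v⟩
  obtain ⟨w, rfl⟩ := f.surjective v
  exact sameCycle_apply_right.2 (htail u w (huv.symm.trans (hf w)))

end ShiftPerm

section CyclicWindow

variable {α : Type*} {n p : ℕ} {x y : List α}

/-- The factor of length `n` starting at position `p` of `x` read cyclically; it is shorter if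
`x.length < n`. -/
def cyclicWindow (n : ℕ) (x : List α) (p : ℕ) : List α := (x.rotate p).take n

lemma length_cyclicWindow (hn : n ≤ x.length) (p : ℕ) : (cyclicWindow n x p).length = n := by
  simpa [cyclicWindow] using hn

lemma cyclicWindow_mod (n : ℕ) (x : List α) (p : ℕ) :
    cyclicWindow n x (p % x.length) = cyclicWindow n x p := by
  rw [cyclicWindow, List.rotate_mod, cyclicWindow]

lemma cyclicWindow_rotate (n : ℕ) (x : List α) (i p : ℕ) :
    cyclicWindow n (x.rotate i) p = cyclicWindow n x (i + p) := by
  rw [cyclicWindow, List.rotate_rotate, cyclicWindow]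

lemma getElem?_cyclicWindow {j : ℕ} (hn : n ≤ x.length) (p : ℕ) (hj : j < n) :
    (cyclicWindow n x p)[j]? = x[(p + j) % x.length]? := by
  rw [cyclicWindow, List.getElem?_take_of_lt hj, List.getElem?_rotate (hj.trans_le hn), add_comm]

lemma take_drop_eq_cyclicWindow (hy : ∀ k < y.length, y[k]? = x[k % x.length]?)
    (hn : n ≤ x.length) (hp : p + n ≤ y.length) : (y.drop p).take n = cyclicWindow n x p := by
  refine List.ext_getElem? fun j ↦ ?_
  by_cases hj : j < n
  · rw [List.getElem?_take_of_lt hj, List.getElem?_drop, hy _ (by lia),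
      getElem?_cyclicWindow hn p hj]
  · rw [List.getElem?_eq_none, List.getElem?_eq_none]
    · rw [length_cyclicWindow hn]; lia
    · rw [List.length_take]; lia

lemma getElem?_append_take {m k : ℕ} (hk : k < (x ++ x.take m).length) :
    (x ++ x.take m)[k]? = x[k % x.length]? := by
  rw [List.length_append, List.length_take] at hk
  rcases lt_or_ge k x.length with hkx | hkx
  · rw [List.getElem?_append_left hkx, Nat.mod_eq_of_lt hkx]
  · rw [List.getElem?_append_right hkx, List.getElem?_take_of_lt (by lia),
      Nat.mod_eq_sub_mod hkx, Nat.mod_eq_of_lt (by lia)]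

lemma getElem?_flatten_replicate {t k : ℕ} (hk : k < t * x.length) :
    (List.replicate t x).flatten[k]? = x[k % x.length]? := by
  induction t generalizing k with
  | zero => lia
  | succ t ih =>
    rw [List.replicate_succ, List.flatten_cons]
    rcases lt_or_ge k x.length with hkx | hkx
    · rw [List.getElem?_append_left hkx, Nat.mod_eq_of_lt hkx]
    · rw [List.getElem?_append_right hkx, ih (by rw [Nat.succ_mul] at hk; lia),
        Nat.mod_eq_sub_mod hkx]

lemma cyclicWindow_map_range {f : Perm (Fin (n + 1) → α)} (hf : IsShiftPerm f)
    {z : Fin (n + 1) → α} {N : ℕ} (hN : n + 1 ≤ N) (hz : (f ^ N) z = z) (p : ℕ) :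
    cyclicWindow (n + 1) ((List.range N).map fun k ↦ (f ^ k) z 0) p = List.ofFn ((f ^ p) z) := by
  have hperiod (k : ℕ) : (f ^ (k % N)) z = (f ^ k) z := by
    simp only [← iterate_eq_pow] at hz ⊢
    exact Function.IsPeriodicPt.iterate_mod_apply hz k
  refine List.ext_getElem? fun j ↦ ?_
  by_cases hj : j < n + 1
  · have hmod : (p + j) % N < N := Nat.mod_lt _ (by lia)
    have hread : (f ^ p) z ⟨j, hj⟩ = (f ^ (p + j)) z 0 := by
      rw [hf.apply_eq_pow_apply_zero ((f ^ p) z), ← Perm.mul_apply, ← pow_add, add_comm p]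
    rw [getElem?_cyclicWindow (by simpa using hN) p hj, List.length_map, List.length_range,
      List.getElem?_map, List.getElem?_range hmod, Option.map_some, hperiod, List.getElem?_ofFn,
      dif_pos hj, hread]
  · rw [List.getElem?_eq_none, List.getElem?_eq_none]
    · simpa using hj
    · rw [length_cyclicWindow (by simpa using hN)]; lia

lemma bijOn_ofFn : BijOn (List.ofFn (n := n)) univ {w : List α | w.length = n} := by
  refine ⟨fun v _ ↦ List.length_ofFn, List.ofFn_injective.injOn, ?_⟩
  rintro w rfl
  exact ⟨w.get, mem_univ _, List.ofFn_get w⟩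

variable (α n) in
theorem exists_bijOn_cyclicWindow [Fintype α] [Nontrivial α] :
    ∃ x : List α, x.length = Fintype.card α ^ (n + 1) ∧
      BijOn (cyclicWindow (n + 1) x) (Iio (Fintype.card α ^ (n + 1))) {w | w.length = n + 1} := by
  classical
  obtain ⟨f, hf, hcyc⟩ := exists_isShiftPerm_isCycleOn_univ α n
  obtain ⟨z⟩ : Nonempty (Fin (n + 1) → α) := inferInstance
  rw [← Finset.coe_univ] at hcyc
  have hcard : (Finset.univ : Finset (Fin (n + 1) → α)).card = Fintype.card α ^ (n + 1) := by simp
  have hz := hcyc.pow_card_apply (Finset.mem_univ z)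
  have hbij := bijOn_pow_apply hcyc (Finset.mem_univ z)
  rw [hcard] at hz hbij
  rw [Finset.coe_univ] at hbij
  refine ⟨(List.range (Fintype.card α ^ (n + 1))).map fun k ↦ (f ^ k) z 0, by simp, ?_⟩
  have hlen : n + 1 ≤ Fintype.card α ^ (n + 1) := (Nat.lt_pow_self Fintype.one_lt_card).le
  exact (bijOn_ofFn.comp hbij).congr fun p _ ↦ (cyclicWindow_map_range hf hlen hz p).symm

end CyclicWindow

section Occurrences

variable {n d t : ℕ} {w x y : List Bool}

lemma occ_eq_card (w y : List Bool) :
    occ w y = #{p ∈ range (y.length + 1 - w.length) | (y.drop p).take w.length = w} :=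
  rfl

lemma occ_append_take (hw : w ≠ []) (hx : w.length ≤ x.length) :
    occ w (x ++ x.take (w.length - 1)) =
      #{p ∈ range x.length | cyclicWindow w.length x p = w} := by
  have hpos : 0 < w.length := List.length_pos_iff.2 hw
  have hlen : (x ++ x.take (w.length - 1)).length = x.length + (w.length - 1) := by simp; lia
  rw [occ_eq_card, hlen, show x.length + (w.length - 1) + 1 - w.length = x.length by lia]
  congr 1
  refine Finset.filter_congr fun p hp ↦ ?_
  rw [Finset.mem_range] at hp
  rw [take_drop_eq_cyclicWindow (fun k hk ↦ getElem?_append_take hk) hx (by lia)]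

lemma occB_of_length_eq_mul (hw : w ≠ []) (hy : y.length = w.length * d) :
    occB w y = #{k ∈ range d | (y.drop (w.length * k)).take w.length = w} := by
  have hpos : 0 < w.length := List.length_pos_iff.2 hw
  have hpos_lt (k : ℕ) : w.length * k < w.length * d + 1 - w.length ↔ k < d := by
    have hmul : w.length * (k + 1) ≤ w.length * d ↔ k + 1 ≤ d := Nat.mul_le_mul_left_iff hpos
    rw [Nat.mul_succ] at hmul
    lia
  calc occB w y
      = #{p ∈ range (y.length + 1 - w.length) | w.length ∣ p ∧ (y.drop p).take w.length = w} := by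
        simp only [Nat.dvd_iff_mod_eq_zero, ← Bool.decide_and, occB]
        rfl
    _ = #({k ∈ range d | (y.drop (w.length * k)).take w.length = w}.image (w.length * ·)) := by
        congr 1
        ext p
        simp only [Finset.mem_filter, Finset.mem_range, Finset.mem_image, hy]
        constructor
        · rintro ⟨hp, ⟨k, rfl⟩, hk⟩
          exact ⟨k, ⟨(hpos_lt k).1 hp, hk⟩, rfl⟩
        · rintro ⟨k, ⟨hk, hwk⟩, rfl⟩
          exact ⟨(hpos_lt k).2 hk, dvd_mul_right _ _, hwk⟩
    _ = _ := Finset.card_image_of_injective _ (mul_right_injective₀ hpos.ne')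

lemma occB_flatten_replicate_rotate (hw : w ≠ []) (hx : w.length ≤ x.length)
    (hd : t * x.length = w.length * d) (i : ℕ) :
    occB w (List.replicate t (x.rotate i)).flatten =
      #{k ∈ range d | cyclicWindow w.length x (i + w.length * k) = w} := by
  have hlen : (List.replicate t (x.rotate i)).flatten.length = t * x.length := by simp
  rw [occB_of_length_eq_mul hw (hlen.trans hd)]
  congr 1
  refine Finset.filter_congr fun k hk ↦ ?_
  have hk' : w.length * k + w.length ≤ w.length * d :=
    Nat.mul_le_mul_left _ (Finset.mem_range.1 hk)
  rw [← cyclicWindow_rotate, take_drop_eq_cyclicWindow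
    (fun j hj ↦ getElem?_flatten_replicate (by simpa using hj)) (by simpa using hx)
    (by rwa [hlen, hd])]

lemma isDeBruijn_iff_bijOn (hn : n ≠ 0) :
    IsDeBruijn n x ↔ x.length = 2 ^ n ∧
      BijOn (cyclicWindow n x) (Iio (2 ^ n)) {w | w.length = n} := by
  refine and_congr_right fun hx ↦ ?_
  have hnx : n ≤ x.length := hx ▸ Nat.lt_two_pow_self.le
  have hocc (w : List Bool) (hw : w.length = n) :
      occ w (x ++ x.take (n - 1)) = 1 ↔ ∃! p, p < 2 ^ n ∧ cyclicWindow n x p = w := by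
    subst hw
    rw [occ_append_take (List.ne_nil_of_length_pos (Nat.pos_of_ne_zero hn)) hnx, hx,
      Finset.card_eq_one_iff_existsUnique]
    simp only [Finset.mem_filter, Finset.mem_range]
  constructor
  · intro h
    refine ⟨fun p _ ↦ length_cyclicWindow hnx p, fun p hp q hq hpq ↦ ?_, fun w hw ↦ ?_⟩
    · exact ((hocc _ (length_cyclicWindow hnx q)).1 (h _ (length_cyclicWindow hnx q))).unique
        ⟨hp, hpq⟩ ⟨hq, rfl⟩
    · exact ((hocc w hw).1 (h w hw)).exists
  · intro h w hw
    obtain ⟨p, hp, rfl⟩ := h.surjOn hw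
    exact (hocc _ hw).2 ⟨p, ⟨hp, rfl⟩, fun q hq ↦ h.injOn hq.1 hp hq.2⟩

end Occurrences

lemma isDeBruijn_db {n : ℕ} (hn : 1 ≤ n) : IsDeBruijn n (db n) := by
  obtain ⟨m, rfl⟩ := Nat.exists_eq_succ_of_ne_zero (Nat.one_le_iff_ne_zero.1 hn)
  obtain ⟨x, hx⟩ := exists_bijOn_cyclicWindow Bool m
  have hfinite : {x | IsDeBruijn (m + 1) x}.Finite :=
    (List.finite_length_eq Bool (2 ^ (m + 1))).subset fun _ h ↦ h.1
  have hleast : ∃ x, IsDeBruijn (m + 1) x ∧ ∀ y, IsDeBruijn (m + 1) y → x ≤ y :=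
    exists_min_image _ id hfinite ⟨x, (isDeBruijn_iff_bijOn m.succ_ne_zero).2 (by simpa using hx)⟩
  rw [db, dif_pos hleast]
  exact hleast.choose_spec.1

lemma add_mul_mod_mul {S D i : ℕ} (hi : i < S) (k : ℕ) :
    (i + S * k) % (S * D) = i + S * (k % D) := by
  rw [Nat.mod_mul, Nat.add_mul_mod_self_left, Nat.mod_eq_of_lt hi,
    Nat.add_mul_div_left _ _ (by lia), Nat.div_eq_of_lt hi, zero_add]

lemma bijOn_add_mul_mod {S D t i : ℕ} (ht : t.Coprime D) (hi : i < S) :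
    BijOn (fun k ↦ (i + S * t * k) % (S * D)) (Iio D) {q | q < S * D ∧ q % S = i} := by
  have hS : 0 < S := by lia
  refine ⟨fun k hk ↦ ⟨?_, ?_⟩, fun k hk l hl hkl ↦ ?_, fun q ⟨hq, hqi⟩ ↦ ?_⟩
  · exact Nat.mod_lt _ (Nat.mul_pos hS (Nat.zero_lt_of_lt hk))
  · simp only [mul_assoc, Nat.mod_mul_right_mod, Nat.add_mul_mod_self_left, Nat.mod_eq_of_lt hi]
  · simp only [mul_assoc, add_mul_mod_mul hi] at hkl
    have hmod : t * k ≡ t * l [MOD D] :=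
      Nat.eq_of_mul_eq_mul_left hS (Nat.add_left_cancel hkl)
    exact (hmod.cancel_left_of_coprime ht.symm).eq_of_lt_of_lt hk hl
  · have hqD : q / S < D := Nat.div_lt_of_lt_mul hq
    obtain ⟨k, hk, hkq⟩ := Nat.exists_mul_mod_eq_of_coprime (q / S) ht (by lia)
    refine ⟨k, hk, ?_⟩
    simp only [mul_assoc, add_mul_mod_mul hi]
    rw [hkq, Nat.mod_eq_of_lt hqD, ← hqi, Nat.mod_add_div]

lemma card_filter_eq_indicator {α β : Type*} [DecidableEq β] {f : α → β} {s : Finset α} {T : Set β}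
    (hf : BijOn f s T) (b : β) : #{a ∈ s | f a = b} = T.indicator 1 b := by
  by_cases hb : b ∈ T
  · obtain ⟨a, ha, rfl⟩ := hf.surjOn hb
    rw [indicator_of_mem hb, Pi.one_apply, Finset.card_eq_one_iff_existsUnique]
    simp only [Finset.mem_filter]
    exact ⟨a, ⟨ha, rfl⟩, fun c hc ↦ hf.injOn hc.1 ha hc.2⟩
  · rw [indicator_of_notMem hb, Finset.card_eq_zero]
    exact Finset.filter_false_of_mem fun a ha hab ↦ hb (hab ▸ hf.mapsTo ha)

section ResidueWindows

variable {α : Type*} {n S D t i : ℕ} {x : List α}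

/-- The factors of length `n` of the cyclic word `x` that start at a position congruent to `i`
modulo `S`. For a de Bruijn string `x` and `S = 2 ^ s`, these will be the aligned blocks of the
string `B_{n,i}`. -/
def residueWindows (n : ℕ) (x : List α) (S i : ℕ) : Set (List α) :=
  cyclicWindow n x '' {q | q < x.length ∧ q % S = i}

lemma cyclicWindow_mem_residueWindows (hx : InjOn (cyclicWindow n x) (Iio x.length)) {q : ℕ}
    (hq : q < x.length) : cyclicWindow n x q ∈ residueWindows n x S i ↔ q % S = i := by
  rw [residueWindows, hx.mem_image_iff (fun _ h ↦ h.1) hq]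
  exact and_iff_right hq

lemma length_of_mem_residueWindows (hn : n ≤ x.length) {w : List α}
    (hw : w ∈ residueWindows n x S i) : w.length = n := by
  obtain ⟨q, -, rfl⟩ := hw
  exact length_cyclicWindow hn q

lemma bijOn_residueWindows (hx : InjOn (cyclicWindow n x) (Iio x.length))
    (hlen : x.length = S * D) (hn : n = S * t) (ht : t.Coprime D) (hi : i < S) :
    BijOn (fun k ↦ cyclicWindow n x (i + n * k)) (Iio D) (residueWindows n x S i) := by
  have hwindow : BijOn (cyclicWindow n x) {q | q < x.length ∧ q % S = i}
      (residueWindows n x S i) := (hx.mono fun _ h ↦ h.1).bijOn_image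
  have hindex := bijOn_add_mul_mod ht hi
  rw [← hlen, ← hn] at hindex
  exact (hwindow.comp hindex).congr fun k _ ↦ cyclicWindow_mod n x _

end ResidueWindows

section Blocks

variable {n s t i : ℕ} {x : List Bool}

lemma two_pow_eq_two_pow_mul (ht : t ≠ 0) (hfact : n = 2 ^ s * t) :
    2 ^ n = 2 ^ s * 2 ^ (n - s) := by
  have hs : s < 2 ^ s := Nat.lt_two_pow_self
  have hle : 2 ^ s ≤ 2 ^ s * t := Nat.le_mul_of_pos_right _ (Nat.pos_of_ne_zero ht)
  rw [← pow_add]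
  congr 1
  lia

namespace IsDeBruijn

lemma bijOn_residueWindows (hx : IsDeBruijn n x) (ht : Odd t) (hfact : n = 2 ^ s * t)
    (hi : i < 2 ^ s) :
    BijOn (fun k ↦ cyclicWindow n x (i + n * k)) (Iio (2 ^ (n - s)))
      (residueWindows n x (2 ^ s) i) := by
  have hn : n ≠ 0 := hfact ▸ (Nat.mul_pos (by positivity) ht.pos).ne'
  have hinj : InjOn (cyclicWindow n x) (Iio x.length) :=
    hx.1 ▸ ((isDeBruijn_iff_bijOn hn).1 hx).2.injOn
  exact _root_.bijOn_residueWindows hinj (hx.1.trans (two_pow_eq_two_pow_mul ht.pos.ne' hfact))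
    hfact ((Nat.coprime_two_right.2 ht).pow_right _) hi

lemma occB_flatten_replicate_rotate (hx : IsDeBruijn n x) (ht : Odd t) (hfact : n = 2 ^ s * t)
    (hi : i < 2 ^ s) {w : List Bool} (hw : w.length = n) :
    occB w (List.replicate t (x.rotate i)).flatten =
      (residueWindows n x (2 ^ s) i).indicator 1 w := by
  have hn : n ≠ 0 := hfact ▸ (Nat.mul_pos (by positivity) ht.pos).ne'
  have hlen : t * x.length = n * 2 ^ (n - s) := by
    rw [hx.1, two_pow_eq_two_pow_mul ht.pos.ne' hfact, ← mul_assoc, mul_comm t, ← hfact]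
  have hbij := hx.bijOn_residueWindows ht hfact hi
  rw [← Finset.coe_range] at hbij
  subst hw
  rw [_root_.occB_flatten_replicate_rotate (List.length_pos_iff.1 (Nat.pos_of_ne_zero hn))
    (hx.1 ▸ Nat.lt_two_pow_self.le) hlen, card_filter_eq_indicator hbij]

lemma setOf_occB_eq_one (hx : IsDeBruijn n x) (ht : Odd t) (hfact : n = 2 ^ s * t)
    (hi : i < 2 ^ s) :
    {w : List Bool | w.length = n ∧ occB w (List.replicate t (x.rotate i)).flatten = 1} =
      residueWindows n x (2 ^ s) i := by
  have hiff {w : List Bool} (hw : w.length = n) :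
      occB w (List.replicate t (x.rotate i)).flatten = 1 ↔ w ∈ residueWindows n x (2 ^ s) i := by
    rw [hx.occB_flatten_replicate_rotate ht hfact hi hw, indicator_eq_one_iff_mem]
  ext w
  refine ⟨fun ⟨hw, h⟩ ↦ (hiff hw).1 h, fun h ↦ ?_⟩
  have hw : w.length = n := length_of_mem_residueWindows (hx.1 ▸ Nat.lt_two_pow_self.le) h
  exact ⟨hw, (hiff hw).2 h⟩

end IsDeBruijn

end Blocks

theorem stmt4_general {n s t : ℕ} {x : List Bool} (ht : Odd t) (hfact : n = 2 ^ s * t)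
    (hx : IsDeBruijn n x) :
    (∀ w : List Bool, w.length = n →
      ∃ i, i < 2 ^ s ∧ occB w (List.replicate t (x.rotate i)).flatten = 1 ∧
        ∀ j, j < 2 ^ s → j ≠ i → occB w (List.replicate t (x.rotate j)).flatten = 0) ∧
    (∀ i, i < 2 ^ s →
      {w : List Bool | w.length = n ∧
        occB w (List.replicate t (x.rotate i)).flatten = 1}.ncard = 2 ^ (n - s)) := by
  have hn : n ≠ 0 := hfact ▸ (Nat.mul_pos (by positivity) ht.pos).ne'
  obtain ⟨hlen, hbij⟩ := (isDeBruijn_iff_bijOn hn).1 hx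
  refine ⟨fun w hw ↦ ?_, fun i hi ↦ ?_⟩
  · obtain ⟨q, hq, rfl⟩ := hbij.surjOn hw
    rw [← hlen] at hbij hq
    have hmem (j : ℕ) : cyclicWindow n x q ∈ residueWindows n x (2 ^ s) j ↔ q % 2 ^ s = j :=
      cyclicWindow_mem_residueWindows hbij.injOn hq
    have hi : q % 2 ^ s < 2 ^ s := Nat.mod_lt q (by positivity)
    refine ⟨q % 2 ^ s, hi, ?_, fun j hj hji ↦ ?_⟩
    · rw [hx.occB_flatten_replicate_rotate ht hfact hi hw, indicator_of_mem ((hmem _).2 rfl),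
        Pi.one_apply]
    · rw [hx.occB_flatten_replicate_rotate ht hfact hj hw,
        indicator_of_notMem fun h ↦ hji ((hmem j).1 h).symm]
  · rw [hx.setOf_occB_eq_one ht hfact hi, ← (hx.bijOn_residueWindows ht hfact hi).ncard_eq,
      ← Finset.coe_range, ncard_coe_finset, Finset.card_range]

end

/-- Let `n = 2^s * t` with `t` odd, `n ≥ 1`. Every `w` of length `n` occurs as an aligned
block of exactly one block `B_{n,i}` (`i < 2^s`), exactly once there and zero times in the
others; consequently each block contains exactly `2^{n-s}` distinct strings of length `n`
as aligned blocks, each exactly once. -/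
theorem stmt4 (n s t : ℕ) (hn : 1 ≤ n) (ht : Odd t) (hfact : n = 2 ^ s * t) :
    (∀ w : List Bool, w.length = n →
      ∃ i, i < 2 ^ s ∧ occB w (Bblk n t i) = 1 ∧
        ∀ j, j < 2 ^ s → j ≠ i → occB w (Bblk n t j) = 0) ∧
    (∀ i, i < 2 ^ s →
      {w : List Bool | w.length = n ∧ occB w (Bblk n t i) = 1}.ncard = 2 ^ (n - s)) :=
  stmt4_general ht hfact (isDeBruijn_db hn)
end
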